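/- The assignment (v⊗w, v'⊗w') ↦ ½·Tr_{E/F}((v, v')·conj(⟨w, w'⟩)) is a well-defined F-bilinear form ⟨⟨ , ⟩⟩ on 𝕎 = V ⊗_E W viewed as an F-vector space, and (𝕎, ⟨⟨ , ⟩⟩) is a symplectic F-space: ⟨⟨ , ⟩⟩ is alternating and nondegenerate, and dim_F 𝕎 = 2mn. -/

import Mathlib

open scoped TensorProduct

/-!
With its variables exchanged, the hermitian form on `V` is conjugate-linear in the first variable
and linear in the second, like the skew-hermitian form on `W`. The tensor product `L` of the two is
therefore a skew-hermitian form on `V ⊗ W` over `E`, and it is nondegenerate because a basis `bᵢ`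
of `V` yields linearly independent functionals `v ↦ (v, bᵢ)`. Composing `L` with an `F`-linear
functional `l : E → F` gives an `F`-bilinear form: `l ≠ 0` makes it nondegenerate, since the values
of `L` against a given vector form an ideal of `E`, and `l ∘ σ = l` makes it alternating. The
symplectic form is the case `l = ½ Tr`, in which exchanging the variables on `V` is harmless
because `Tr` is invariant under conjugation.
-/

section TensorProduct

variable {S R M₁ N₁ M₂ N₂ : Type*}

section Semiring

variable [CommSemiring S] [CommSemiring R] {σ : S →+* R}
  [AddCommMonoid M₁] [Module S M₁] [AddCommMonoid N₁] [Module S N₁]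
  [AddCommMonoid M₂] [Module R M₂] [AddCommMonoid N₂] [Module R N₂]

/-- The tensor product of two sesquilinear forms, given on pure tensors by
`(m ⊗ n, m' ⊗ n') ↦ B₁ m m' * B₂ n n'`. -/
noncomputable def sesqTensor (B₁ : M₁ →ₛₗ[σ] M₂ →ₗ[R] R) (B₂ : N₁ →ₛₗ[σ] N₂ →ₗ[R] R) :
    M₁ ⊗[S] N₁ →ₛₗ[σ] M₂ ⊗[R] N₂ →ₗ[R] R :=
  TensorProduct.dualDistrib R M₂ N₂ ∘ₛₗ TensorProduct.map B₁ B₂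

@[simp]
theorem sesqTensor_tmul_tmul (B₁ : M₁ →ₛₗ[σ] M₂ →ₗ[R] R) (B₂ : N₁ →ₛₗ[σ] N₂ →ₗ[R] R)
    (m : M₁) (n : N₁) (m' : M₂) (n' : N₂) :
    sesqTensor B₁ B₂ (m ⊗ₜ n) (m' ⊗ₜ n') = B₁ m m' * B₂ n n' :=
  rfl

end Semiring

variable [CommRing S] [CommRing R] {σ : S →+* R}
  [AddCommGroup M₁] [Module S M₁] [AddCommGroup N₁] [Module S N₁]
  [AddCommGroup M₂] [Module R M₂] [AddCommGroup N₂] [Module R N₂]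
  {B₁ : M₁ →ₛₗ[σ] M₂ →ₗ[R] R} {B₂ : N₁ →ₛₗ[σ] N₂ →ₗ[R] R}

theorem linearIndependent_apply_of_separatingLeft {ι : Type*} {v : ι → M₁}
    (hσ : Function.Surjective σ) (h₁ : B₁.SeparatingLeft) (hv : LinearIndependent S v) :
    LinearIndependent R fun i => B₁ (v i) :=
  hv.map_of_surjective_injective σ B₁.toAddMonoidHom hσ
    (fun m hm => h₁ m (LinearMap.congr_fun hm)) B₁.map_smulₛₗ

theorem separatingLeft_sesqTensor [Module.Free S M₁] (hσ : Function.Surjective σ)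
    (h₁ : B₁.SeparatingLeft) (h₂ : B₂.SeparatingLeft) : (sesqTensor B₁ B₂).SeparatingLeft := by
  intro u hu
  obtain ⟨⟨_, b⟩⟩ := Module.Free.exists_basis (R := S) (M := M₁)
  obtain ⟨c, rfl⟩ := TensorProduct.eq_repr_basis_left b u
  have hb := linearIndependent_apply_of_separatingLeft hσ h₁ b.linearIndependent
  have sum_eq_zero (n' : N₂) : ∑ i ∈ c.support, B₂ (c i) n' • B₁ (b i) = 0 := by
    ext m'
    simpa [Finsupp.sum, mul_comm] using hu (m' ⊗ₜ n')
  have coeff_eq_zero : ∀ i ∈ c.support, c i = 0 := fun i hi => h₂ _ fun n' =>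
    linearIndependent_iff'.mp hb c.support (fun j => B₂ (c j) n') (sum_eq_zero n') i hi
  exact Finset.sum_eq_zero fun i hi => by simp [coeff_eq_zero i hi]

end TensorProduct

section EpsHermitian

variable {R M N : Type*} [CommSemiring R] [AddCommMonoid M] [Module R M]
  [AddCommMonoid N] [Module R N] {σ : R →+* R}

/-- An `ε`-hermitian form with respect to `σ`: hermitian for `ε = 1`, skew-hermitian for
`ε = -1`. As in `LinearMap.IsSymm`, neither `σ` nor `ε` is required to satisfy the relations
`σ ∘ σ = id` and `ε * σ ε = 1`. -/
def IsEpsHermitian (ε : R) (B : M →ₛₗ[σ] M →ₗ[R] R) : Prop :=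
  ∀ x y, B y x = ε * σ (B x y)

/-- The sesquilinear form with underlying function `f`, for `f` linear in the second variable;
semilinearity in the first variable comes from the `ε`-hermitian symmetry. -/
def epsHermitianForm (σ : R →+* R) (ε : R) (f : M → M → R)
    (hadd : ∀ x y₁ y₂, f x (y₁ + y₂) = f x y₁ + f x y₂)
    (hsmul : ∀ (c : R) (x y : M), f x (c • y) = c * f x y)
    (hf : ∀ x y, f y x = ε * σ (f x y)) : M →ₛₗ[σ] M →ₗ[R] R :=
  LinearMap.mk₂'ₛₗ σ (RingHom.id R) f
    (fun x₁ x₂ y => by rw [hf y, hadd, map_add, mul_add, ← hf, ← hf])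
    (fun c x y => by rw [hf y, hsmul, map_mul, mul_left_comm, ← hf, smul_eq_mul])
    hadd hsmul

theorem IsEpsHermitian.sesqTensor {ε₁ ε₂ : R} {B₁ : M →ₛₗ[σ] M →ₗ[R] R}
    {B₂ : N →ₛₗ[σ] N →ₗ[R] R} (h₁ : IsEpsHermitian ε₁ B₁) (h₂ : IsEpsHermitian ε₂ B₂) :
    IsEpsHermitian (ε₁ * ε₂) (sesqTensor B₁ B₂) := by
  intro u u'
  induction u with
  | zero => simp
  | add a b ha hb => simp only [map_add, LinearMap.add_apply, ha, hb, mul_add]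
  | tmul m n =>
    induction u' with
    | zero => simp
    | add a b ha hb => simp only [map_add, LinearMap.add_apply, ha, hb, mul_add]
    | tmul m' n' =>
      rw [sesqTensor_tmul_tmul, sesqTensor_tmul_tmul, h₁ m, h₂ n, map_mul, mul_mul_mul_comm]

end EpsHermitian

section Transfer

variable {F E M N : Type*}

/-- The `F`-bilinear form `l ∘ B` obtained from a sesquilinear form `B` over an `F`-algebra `E` and
an `F`-linear functional `l` on `E`. -/
def transferForm [CommSemiring F] [CommSemiring E] [Algebra F E]
    [AddCommMonoid M] [Module E M] [Module F M] [IsScalarTower F E M]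
    [AddCommMonoid N] [Module E N] [Module F N] [IsScalarTower F E N] {σ : E →ₐ[F] E}
    (l : E →ₗ[F] F) (B : M →ₛₗ[(σ : E →+* E)] N →ₗ[E] E) : M →ₗ[F] N →ₗ[F] F :=
  LinearMap.mk₂ F (fun x y => l (B x y))
    (fun x₁ x₂ y => by simp only [map_add, LinearMap.add_apply])
    (fun r x y => by
      rw [← algebraMap_smul E r x, B.map_smulₛₗ, RingHom.coe_coe, σ.commutes, LinearMap.smul_apply,
        algebraMap_smul, map_smul])
    (fun x y₁ y₂ => by simp only [map_add])
    (fun r x y => by rw [← algebraMap_smul E r y, map_smul, algebraMap_smul, map_smul])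

theorem separatingLeft_transferForm [CommSemiring F] [Field E] [Algebra F E]
    [AddCommMonoid M] [Module E M] [Module F M] [IsScalarTower F E M]
    [AddCommMonoid N] [Module E N] [Module F N] [IsScalarTower F E N] {σ : E →ₐ[F] E}
    {l : E →ₗ[F] F} (hl : l ≠ 0) {B : M →ₛₗ[(σ : E →+* E)] N →ₗ[E] E} (hB : B.SeparatingLeft) :
    (transferForm l B).SeparatingLeft := by
  intro x hx
  refine hB x fun y => ?_
  by_contra hxy
  refine hl (LinearMap.ext fun e => ?_)
  have hscaled : B x ((e / B x y) • y) = e := by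
    rw [map_smul, smul_eq_mul, div_mul_cancel₀ e hxy]
  rw [← hscaled]
  exact hx _

theorem isAlt_transferForm [CommRing F] [NoZeroDivisors F] [NeZero (2 : F)] [CommRing E]
    [Algebra F E] [AddCommMonoid M] [Module E M] [Module F M] [IsScalarTower F E M]
    {σ : E →ₐ[F] E} {l : E →ₗ[F] F} (hl : ∀ e, l (σ e) = l e)
    {B : M →ₛₗ[(σ : E →+* E)] M →ₗ[E] E} (hB : IsEpsHermitian (-1) B) :
    (transferForm l B).IsAlt := by
  intro x
  have hneg : l (B x x) = -l (B x x) :=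
    calc l (B x x) = l (-σ (B x x)) := congrArg l ((hB x x).trans (neg_one_mul _))
      _ = -l (B x x) := by rw [map_neg, hl]
  have htwo : 2 * l (B x x) = 0 := by linear_combination hneg
  exact (mul_eq_zero.mp htwo).resolve_left two_ne_zero

end Transfer

section Quadratic

theorem univ_eq_pair_of_isQuadraticExtension {F E : Type*} [Field F] [Field E] [Algebra F E]
    [Algebra.IsQuadraticExtension F E] [DecidableEq (E ≃ₐ[F] E)] {σ : E ≃ₐ[F] E} (hσ : σ ≠ 1) :
    (Finset.univ : Finset (E ≃ₐ[F] E)) = {1, σ} := by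
  refine (Finset.eq_of_subset_of_card_le (Finset.subset_univ _) ?_).symm
  rw [Finset.card_pair hσ.symm, Finset.card_univ,
    ← Algebra.IsQuadraticExtension.finrank_eq_two F E]
  exact AlgEquiv.card_le

theorem algebraMap_trace_of_isQuadraticExtension {F E : Type*} [Field F] [Field E] [Algebra F E]
    [Algebra.IsQuadraticExtension F E] {σ : E ≃ₐ[F] E} (hσ : σ ≠ 1) (x : E) :
    algebraMap F E (Algebra.trace F E x) = x + σ x := by
  classical
  have huniv := univ_eq_pair_of_isQuadraticExtension hσ
  have : IsGalois F E := IsGalois.of_card_aut_eq_finrank F E <| by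
    rw [Nat.card_eq_fintype_card, ← Finset.card_univ, huniv, Finset.card_pair hσ.symm,
      Algebra.IsQuadraticExtension.finrank_eq_two]
  rw [trace_eq_sum_automorphisms, huniv, Finset.sum_pair hσ.symm, AlgEquiv.one_apply]

theorem rank_eq_two_mul_rank (F E M : Type*) [CommRing F] [StrongRankCondition F] [Ring E]
    [StrongRankCondition E] [Algebra F E] [Algebra.IsQuadraticExtension F E] [AddCommGroup M]
    [Module F M] [Module E M] [IsScalarTower F E M] [Module.Free E M] :
    Module.rank F M = 2 * Module.rank E M := by
  have hrank : Module.rank F E = 2 := (Module.rank_eq_ofNat_iff_finrank_eq_ofNat 2).mpr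
    (Algebra.IsQuadraticExtension.finrank_eq_two F E)
  apply Cardinal.lift_injective
  rw [← lift_rank_mul_lift_rank F E M, hrank, Cardinal.lift_mul, Cardinal.lift_ofNat,
    Cardinal.lift_ofNat]

/-- The functional `½ Tr` of an extension `E / F`; the junk value of `2⁻¹` makes it zero in
characteristic two. -/
noncomputable def halfTrace (F E : Type*) [Field F] [CommRing E] [Algebra F E] : E →ₗ[F] F :=
  (2 : F)⁻¹ • Algebra.trace F E

theorem two_mul_halfTrace {F E : Type*} [Field F] [NeZero (2 : F)] [CommRing E] [Algebra F E]
    (x : E) : 2 * halfTrace F E x = Algebra.trace F E x :=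
  mul_inv_cancel_left₀ two_ne_zero _

theorem halfTrace_algEquiv {F E : Type*} [Field F] [CommRing E] [Algebra F E] (σ : E ≃ₐ[F] E)
    (x : E) : halfTrace F E (σ x) = halfTrace F E x :=
  congrArg ((2 : F)⁻¹ * ·) (Algebra.trace_eq_of_algEquiv σ x)

theorem halfTrace_ne_zero (F E : Type*) [Field F] [NeZero (2 : F)] [CommRing E] [Algebra F E]
    [Algebra.IsQuadraticExtension F E] : halfTrace F E ≠ 0 := by
  intro h
  have htrace : Algebra.trace F E 1 = 2 := by
    simpa [Algebra.IsQuadraticExtension.finrank_eq_two]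
      using Algebra.trace_algebraMap (S := E) (1 : F)
  rw [← two_mul_halfTrace, h, LinearMap.zero_apply, mul_zero] at htrace
  exact two_ne_zero htrace.symm

end Quadratic

theorem stmt_2_general {F E V W : Type*} [Field F] [NeZero (2 : F)] [Field E] [Algebra F E]
    [Algebra.IsQuadraticExtension F E] (σ : E ≃ₐ[F] E) (hσ : σ ≠ 1)
    [AddCommGroup V] [Module E V] [Module F V] [IsScalarTower F E V]
    (BV : V → V → E)
    (hVadd : ∀ v₁ v₂ v, BV (v₁ + v₂) v = BV v₁ v + BV v₂ v)
    (hVsmul : ∀ (c : E) (v v' : V), BV (c • v) v' = c * BV v v')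
    (hVherm : ∀ v v', BV v' v = σ (BV v v'))
    (hVnd : ∀ v, (∀ v', BV v v' = 0) → v = 0)
    [AddCommGroup W] [Module E W]
    (BW : W → W → E)
    (hWadd : ∀ w w₁ w₂, BW w (w₁ + w₂) = BW w w₁ + BW w w₂)
    (hWsmul : ∀ (c : E) (w w' : W), BW w (c • w') = c * BW w w')
    (hWskew : ∀ w w', BW w' w = -σ (BW w w'))
    (hWnd : ∀ w, (∀ w', BW w w' = 0) → w = 0) :
    ∃ B : (V ⊗[E] W) →ₗ[F] (V ⊗[E] W) →ₗ[F] F,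
      (∀ (v v' : V) (w w' : W),
        algebraMap F E (2 * B (v ⊗ₜ[E] w) (v' ⊗ₜ[E] w'))
          = BV v v' * σ (BW w w') + σ (BV v v' * σ (BW w w'))) ∧
      B.IsAlt ∧ B.SeparatingLeft ∧
      Module.rank F (V ⊗[E] W)
        = 2 * Cardinal.lift (Module.rank E V) * Cardinal.lift (Module.rank E W) := by
  have hV (v v' : V) : BV v v' = 1 * σ (BV v' v) := by rw [one_mul, ← hVherm]
  have hW (w w' : W) : BW w' w = -1 * σ (BW w w') := by rw [neg_one_mul, hWskew]
  let LV := epsHermitianForm ((σ : E →ₐ[F] E) : E →+* E) 1 (fun v' v => BV v v')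
    (fun v v₁ v₂ => hVadd v₁ v₂ v) (fun c v v' => hVsmul c v' v) fun v' v => hV v' v
  let LW := epsHermitianForm ((σ : E →ₐ[F] E) : E →+* E) (-1) BW hWadd hWsmul hW
  have hskew : IsEpsHermitian (-1) (sesqTensor LV LW) :=
    one_mul (-1 : E) ▸ IsEpsHermitian.sesqTensor (fun v' v => hV v' v) hW
  have hLV : LV.SeparatingLeft := fun v hv => hVnd v fun v' => by
    rw [hVherm v', show BV v' v = 0 from hv v', map_zero]
  refine ⟨transferForm (halfTrace F E) (sesqTensor LV LW), fun v v' w w' => ?_,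
    isAlt_transferForm (halfTrace_algEquiv σ) hskew,
    separatingLeft_transferForm (halfTrace_ne_zero F E)
      (separatingLeft_sesqTensor σ.surjective hLV hWnd), ?_⟩
  · have hconj : BV v v' * σ (BW w w') = σ (BV v' v * BW w w') := by rw [map_mul, ← hVherm]
    rw [hconj, ← algebraMap_trace_of_isQuadraticExtension hσ, Algebra.trace_eq_of_algEquiv,
      ← two_mul_halfTrace]
    rfl
  · rw [rank_eq_two_mul_rank F E, rank_tensorProduct, mul_assoc]

/- STATEMENT 2:
The assignment (v⊗w, v'⊗w') ↦ ½·Tr_{E/F}((v, v')·conj(⟨w, w'⟩)) is a well-defined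
F-bilinear form ⟨⟨ , ⟩⟩ on 𝕎 = V ⊗_E W viewed as an F-vector space, and (𝕎, ⟨⟨ , ⟩⟩)
is a symplectic F-space: ⟨⟨ , ⟩⟩ is alternating and nondegenerate, and dim_F 𝕎 = 2mn.

Here Tr_{E/F}(x) = x + σ x, so the defining property of B on pure tensors is expressed
(inside E, via the injective algebra map F → E) as
  algebraMap F E (2 * B (v ⊗ w) (v' ⊗ w')) = x + σ x  with  x = BV v v' * σ (BW w w'). -/
theorem stmt_2
    (p : ℕ) [Fact p.Prime]
    (F : Type*) [Field F] [Algebra ℚ_[p] F] [FiniteDimensional ℚ_[p] F]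
    (E : Type*) [Field E] [Algebra F E] (hquad : Module.finrank F E = 2)
    (σ : E ≃ₐ[F] E) (hinv : ∀ x, σ (σ x) = x) (hne : ∃ x : E, σ x ≠ x)
    (V : Type*) [AddCommGroup V] [Module E V] [Module F V] [IsScalarTower F E V]
    [FiniteDimensional E V] (hm : 1 ≤ Module.finrank E V)
    (BV : V → V → E)
    (hVadd : ∀ v₁ v₂ v, BV (v₁ + v₂) v = BV v₁ v + BV v₂ v)
    (hVsmul : ∀ (c : E) (v v' : V), BV (c • v) v' = c * BV v v')
    (hVherm : ∀ v v', BV v' v = σ (BV v v'))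
    (hVnd : ∀ v, (∀ v', BV v v' = 0) → v = 0)
    (W : Type*) [AddCommGroup W] [Module E W] [FiniteDimensional E W]
    (hn : 1 ≤ Module.finrank E W)
    (BW : W → W → E)
    (hWadd : ∀ w w₁ w₂, BW w (w₁ + w₂) = BW w w₁ + BW w w₂)
    (hWsmul : ∀ (c : E) (w w' : W), BW w (c • w') = c * BW w w')
    (hWskew : ∀ w w', BW w' w = -σ (BW w w'))
    (hWnd : ∀ w, (∀ w', BW w w' = 0) → w = 0) :
    ∃ B : (V ⊗[E] W) →ₗ[F] (V ⊗[E] W) →ₗ[F] F,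
      -- B is the form ½·Tr_{E/F}((v, v')·conj(⟨w, w'⟩)) on pure tensors
      (∀ (v v' : V) (w w' : W),
        algebraMap F E (2 * B (v ⊗ₜ[E] w) (v' ⊗ₜ[E] w'))
          = BV v v' * σ (BW w w') + σ (BV v v' * σ (BW w w'))) ∧
      -- B is alternating
      (∀ u : V ⊗[E] W, B u u = 0) ∧
      -- B is nondegenerate
      (∀ u : V ⊗[E] W, (∀ u', B u u' = 0) → u = 0) ∧
      -- dim_F 𝕎 = 2mn
      Module.finrank F (V ⊗[E] W)
        = 2 * Module.finrank E V * Module.finrank E W := by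
  have : CharZero F := charZero_of_injective_algebraMap (algebraMap ℚ_[p] F).injective
  have : Algebra.IsQuadraticExtension F E := ⟨hquad⟩
  obtain ⟨B, hB, halt, hnd, hrank⟩ := stmt_2_general σ (DFunLike.ne_iff.mpr hne)
    BV hVadd hVsmul hVherm hVnd BW hWadd hWsmul hWskew hWnd
  exact ⟨B, hB, halt, hnd, by simp [Module.finrank, hrank]⟩
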